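/- For q > 2 and any h ≥ 2 such that ⌈(h+2)/2⌉ ≤ k ≤ h, there exists a GH code C_H of length n = q^h over 𝔽_q with ker(C_H) = k and rank(C_H) = r if and only if r ∈ {h+2, …, k + q^{h+1−k} − 1}. -/

import Mathlib

open Finset

/-- `H` is a generalized Hadamard matrix with parameter `lam`: for every pair of
distinct rows, the multiset of coordinatewise differences contains every element
of `F` exactly `lam` times. -/
def IsGH {F : Type*} [Fintype F] [DecidableEq F] [Sub F]
    {ι : Type*} [Fintype ι] (lam : ℕ) (H : Matrix ι ι F) : Prop :=
  ∀ i j : ι, i ≠ j → ∀ a : F,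
    (Finset.univ.filter (fun s => H i s - H j s = a)).card = lam

/-- A matrix is normalized if its first row and first column are all zeros. -/
def Normalized {F : Type*} [Zero F] {n : ℕ} (H : Matrix (Fin n) (Fin n) F) : Prop :=
  ∀ i s : Fin n, (i.val = 0 ∨ s.val = 0) → H i s = 0

/-- The code `F_H` whose codewords are the rows of `H`. -/
def rowSet {F ι : Type*} (H : Matrix ι ι F) : Set (ι → F) :=
  Set.range (fun i => H i)

/-- The GH code `C_H = ⋃_{α ∈ F} (F_H + α·𝟏)`. -/
def ghCode {F ι : Type*} [Add F] (H : Matrix ι ι F) : Set (ι → F) :=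
  {v | ∃ (α : F) (i : ι), v = fun s => H i s + α}

/-- The rank of a code: the dimension of its linear span. -/
noncomputable def rankC {F ι : Type*} [Field F] (C : Set (ι → F)) : ℕ :=
  Module.finrank F (Submodule.span F C)

/-- The kernel `K(C) = {x : αx + C = C for all α}` of a code. -/
def kerSet {F ι : Type*} [Mul F] [Add F] (C : Set (ι → F)) : Set (ι → F) :=
  {x | ∀ α : F, (fun c => (fun i => α * x i) + c) '' C = C}

/-- The dimension of the kernel of a code. -/
noncomputable def kerDim {F ι : Type*} [Field F] (C : Set (ι → F)) : ℕ :=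
  Module.finrank F (Submodule.span F (kerSet C))

/-- The `p`-kernel `K_p(C) = {x : x + C = C}` of a code. -/
def pKerSet {F ι : Type*} [Add F] (C : Set (ι → F)) : Set (ι → F) :=
  {x | (fun c => x + c) '' C = C}

/-- The Euclidean orthogonal code `C^⊥`. -/
def dualSet {F ι : Type*} [CommRing F] [Fintype ι] (C : Set (ι → F)) : Set (ι → F) :=
  {v | ∀ w ∈ C, ∑ i, v i * w i = 0}

/-- Two matrices are translation equivalent if the rows of one are obtained from the
rows of the other by adding a fixed vector. -/
def TransEquiv {F ι : Type*} [Add F] (B B' : Matrix ι ι F) : Prop :=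
  ∃ v : ι → F, rowSet B' = (fun b => v + b) '' rowSet B

/-- The Kronecker sum `H₁ ⊕ H₂`. -/
def kroneckerSum {F ι κ : Type*} [Add F] (H₁ : Matrix ι ι F) (H₂ : Matrix κ κ F) :
    Matrix (ι × κ) (ι × κ) F :=
  fun p r => H₁ p.1 r.1 + H₂ p.2 r.2

/-- The Kronecker sum `H₁ ⊕ [B₁, …, Bₙ]`, whose `(i,j)` block is `h_{ij} + B_i`. -/
def kroneckerSumFam {F ι κ : Type*} [Add F] (H₁ : Matrix ι ι F) (B : ι → Matrix κ κ F) :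
    Matrix (ι × κ) (ι × κ) F :=
  fun p r => H₁ p.1 r.1 + B p.1 p.2 r.2

/-- The multiplicative-table matrix `S_q` of a field. -/
def mulTable (F : Type*) [Mul F] : Matrix F F F := fun i j => i * j

/-- A code is `K`-additive, for a subfield `K`, if it is a linear space over `K`. -/
def IsAdditiveOver {F ι : Type*} [Field F] (K : Subfield F) (C : Set (ι → F)) : Prop :=
  (0 : ι → F) ∈ C ∧ (∀ x ∈ C, ∀ y ∈ C, x + y ∈ C) ∧
    ∀ (a : K), ∀ x ∈ C, (fun i => (a : F) * x i) ∈ C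

section KernelAndSpan

variable {F : Type*} [Field F] {ι : Type*}

lemma mem_kerSet_iff {C : Set (ι → F)} {x : ι → F} :
    x ∈ kerSet C ↔ ∀ α : F, ∀ c ∈ C, α • x + c ∈ C := by
  constructor
  · intro hx α c hc
    have := hx α
    rw [← this]
    exact ⟨c, hc, rfl⟩
  · intro hx α
    apply Set.Subset.antisymm
    · rintro _ ⟨c, hc, rfl⟩
      exact hx α c hc
    · intro c hc
      refine ⟨(-α) • x + c, hx (-α) c hc, ?_⟩
      ext i
      simp

/-- The kernel of a code, as a linear subspace. -/
def kerSubmodule (C : Set (ι → F)) : Submodule F (ι → F) where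
  carrier := kerSet C
  zero_mem' := by
    rw [mem_kerSet_iff]
    intro α c hc
    simpa using hc
  add_mem' := by
    intro x y hx hy
    rw [mem_kerSet_iff] at *
    intro α c hc
    rw [smul_add, add_assoc]
    exact hx α _ (hy α c hc)
  smul_mem' := by
    intro b x hx
    rw [mem_kerSet_iff] at *
    intro α c hc
    rw [smul_smul]
    exact hx _ c hc

lemma kerDim_eq_finrank (C : Set (ι → F)) :
    kerDim C = Module.finrank F (kerSubmodule C) := by
  have : Submodule.span F (kerSet C) = kerSubmodule C :=
    Submodule.span_eq (kerSubmodule C)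
  rw [kerDim, this]

lemma kerSet_subset {C : Set (ι → F)} (h0 : (0 : ι → F) ∈ C) : kerSet C ⊆ C := by
  intro x hx
  simpa using mem_kerSet_iff.1 hx 1 0 h0

lemma rankC_image {V : Type*} [AddCommGroup V] [Module F V] (Φ : V →ₗ[F] (ι → F))
    (hΦ : Function.Injective Φ) (D : Set V) :
    rankC (Φ '' D) = Module.finrank F (Submodule.span F D) := by
  rw [rankC, Submodule.span_image]
  exact (Submodule.equivMapOfInjective Φ hΦ _).finrank_eq.symm

lemma kerDim_image {V : Type*} [AddCommGroup V] [Module F V] (Φ : V →ₗ[F] (ι → F))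
    (hΦ : Function.Injective Φ) {D : Set V} (h0 : (0 : V) ∈ D) (K : Submodule F V)
    (hK : ∀ x, x ∈ K ↔ ∀ α : F, ∀ c ∈ D, α • x + c ∈ D) :
    kerDim (Φ '' D) = Module.finrank F K := by
  have key : kerSubmodule (Φ '' D) = K.map Φ := by
    ext y
    change y ∈ kerSet _ ↔ _
    rw [Submodule.mem_map]
    constructor
    · intro hy
      obtain ⟨x, -, rfl⟩ := kerSet_subset (C := Φ '' D) ⟨0, h0, map_zero Φ⟩ hy
      refine ⟨x, (hK x).2 fun α c hc => ?_, rfl⟩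
      obtain ⟨d, hd, hdx⟩ := mem_kerSet_iff.1 hy α (Φ c) ⟨c, hc, rfl⟩
      rw [← map_smul, ← map_add] at hdx
      rwa [← hΦ hdx]
    · rintro ⟨x, hx, rfl⟩
      rw [mem_kerSet_iff]
      rintro α _ ⟨c, hc, rfl⟩
      exact ⟨α • x + c, (hK x).1 hx α c hc, by simp⟩
  rw [kerDim_eq_finrank, key]
  exact (Submodule.equivMapOfInjective Φ hΦ _).finrank_eq.symm

variable [Fintype F] [Fintype ι]

lemma kerDim_eq_of_rankC_le {C : Set (ι → F)} {d : ℕ} (hC : C.ncard = Fintype.card F ^ d)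
    (hr : rankC C ≤ d) : kerDim C = d := by
  have hcard : ((Submodule.span F C : Submodule F (ι → F)) : Set (ι → F)).ncard
      = Fintype.card F ^ rankC C := by
    rw [← Nat.card_coe_set_eq, ← Nat.card_eq_fintype_card (α := F)]
    exact Module.natCard_eq_pow_finrank
  have hq : 1 < Fintype.card F := Fintype.one_lt_card
  have hCS : C = (Submodule.span F C : Submodule F (ι → F)) := by
    refine Set.eq_of_subset_of_ncard_le Submodule.subset_span ?_ (Set.toFinite _)
    rw [hcard, hC]
    exact Nat.pow_le_pow_right hq.le hr
  have hrd : rankC C = d := by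
    apply Nat.pow_right_injective hq
    simp only
    rw [← hcard, ← hCS, hC]
  have hker : kerSubmodule C = Submodule.span F C := by
    ext x
    change x ∈ kerSet C ↔ x ∈ ((Submodule.span F C : Submodule F (ι → F)) : Set (ι → F))
    rw [← hCS]
    constructor
    · exact fun hx => kerSet_subset (by rw [hCS]; exact Submodule.zero_mem _) hx
    · intro hx
      rw [mem_kerSet_iff]
      intro α c hc
      rw [hCS] at hx hc ⊢
      exact Submodule.add_mem _ (Submodule.smul_mem _ _ hx) hc
  rw [kerDim_eq_finrank, hker]
  exact hrd

lemma rankC_le {C : Set (ι → F)} {d : ℕ} (hC : C.ncard = Fintype.card F ^ d)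
    (h0 : (0 : ι → F) ∈ C) (hkd : kerDim C ≤ d) :
    rankC C ≤ kerDim C + (Fintype.card F ^ (d - kerDim C) - 1) := by
  classical
  rw [kerDim_eq_finrank] at *
  set K := kerSubmodule C with hKdef
  have hq : 0 < Fintype.card F := Fintype.card_pos
  let Cf : Finset (ι → F) := C.toFinite.toFinset
  have hCf : Cf.card = Fintype.card F ^ d := by
    rw [← hC, Set.ncard_eq_toFinset_card C]
  have hmem : ∀ x, x ∈ Cf ↔ x ∈ C := fun x => by simp [Cf]
  let I : Finset ((ι → F) ⧸ K) := Cf.image K.mkQ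
  have hKcard : Nat.card K = Fintype.card F ^ Module.finrank F K := by
    rw [← Nat.card_eq_fintype_card (α := F)]
    exact Module.natCard_eq_pow_finrank
  have hfib : ∀ b ∈ I, Fintype.card F ^ Module.finrank F K
      ≤ (Cf.filter fun c => K.mkQ c = b).card := by
    intro b hb
    obtain ⟨c, hc, rfl⟩ := Finset.mem_image.1 hb
    rw [← hKcard, Nat.card_eq_fintype_card, ← Finset.card_univ]
    refine Finset.card_le_card_of_injOn (fun x : K => (x : ι → F) + c) ?_ ?_
    · intro x _
      simp only [Finset.coe_filter, Set.mem_ofPred_eq, map_add, hmem]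
      refine ⟨?_, by simp⟩
      simpa using mem_kerSet_iff.1 x.2 1 c ((hmem c).1 hc)
    · intro x _ y _ hxy
      simpa using hxy
  have hIcard : I.card ≤ Fintype.card F ^ (d - Module.finrank F K) := by
    have h1 := Finset.card_nsmul_le_sum I (fun b => (Cf.filter fun c => K.mkQ c = b).card) _ hfib
    rw [← Finset.card_eq_sum_card_image, hCf, smul_eq_mul] at h1
    refine Nat.le_of_mul_le_mul_right (h1.trans_eq ?_) (pow_pos hq (Module.finrank F K))
    rw [← pow_add, Nat.sub_add_cancel hkd]
  have h0I : (0 : (ι → F) ⧸ K) ∈ I :=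
    Finset.mem_image.2 ⟨0, (hmem 0).2 h0, map_zero _⟩
  have hspan : Submodule.map K.mkQ (Submodule.span F C)
      = Submodule.span F ((I.erase 0 : Finset _) : Set ((ι → F) ⧸ K)) := by
    have : K.mkQ '' C = (I : Set ((ι → F) ⧸ K)) := by
      ext b
      simp [I, hmem]
    rw [Submodule.map_span, this, Finset.coe_erase, Submodule.span_sdiff_singleton_zero]
  have hquot : Module.finrank F (Submodule.map K.mkQ (Submodule.span F C))
      ≤ Fintype.card F ^ (d - Module.finrank F K) - 1 := by
    rw [hspan]
    refine (finrank_span_finset_le_card _).trans ?_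
    rw [Finset.card_erase_of_mem h0I]
    exact Nat.sub_le_sub_right hIcard 1
  have hle : Submodule.span F C ≤ (Submodule.map K.mkQ (Submodule.span F C)).comap K.mkQ :=
    Submodule.le_comap_map _ _
  have hrn := LinearMap.finrank_range_add_finrank_ker
    (K.mkQ.domRestrict (Submodule.span F C))
  rw [LinearMap.range_domRestrict] at hrn
  have hkerle : Module.finrank F (LinearMap.ker (K.mkQ.domRestrict (Submodule.span F C)))
      ≤ Module.finrank F K := by
    rw [← Submodule.finrank_map_subtype_eq]
    apply Submodule.finrank_mono
    rintro _ ⟨x, hx, rfl⟩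
    have hx' : K.mkQ x = 0 := hx
    simpa using hx'
  rw [rankC, ← hrn]
  omega

end KernelAndSpan

section GHCode

variable {F : Type*} [Field F] [Fintype F] [DecidableEq F] {ι : Type*} [Fintype ι]

lemma IsGH.ncard_ghCode {lam : ℕ} (hlam : 0 < lam) [Nonempty ι] {H : Matrix ι ι F}
    (hH : IsGH lam H) : (ghCode H).ncard = Fintype.card F * Fintype.card ι := by
  classical
  have hinj : Function.Injective (fun p : F × ι => fun s => H p.2 s + p.1) := by
    rintro ⟨α, i⟩ ⟨β, j⟩ hij
    have hs : ∀ s, H i s + α = H j s + β := fun s => congrFun hij s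
    have hijeq : i = j := by
      by_contra hne
      obtain ⟨s, hs'⟩ := Finset.card_pos.1 (hlam.trans_eq (hH i j hne (β - α + 1)).symm)
      have h1 := (Finset.mem_filter.1 hs').2
      have : (1 : F) = 0 := by linear_combination hs s - h1
      exact one_ne_zero this
    subst hijeq
    obtain ⟨s⟩ := ‹Nonempty ι›
    have := hs s
    simp_all
  have : ghCode H = Set.range (fun p : F × ι => fun s => H p.2 s + p.1) := by
    ext v
    simp [ghCode, eq_comm]
  rw [this, Set.ncard_range_of_injective hinj]
  simp

lemma card_filter_eq_of_translate {G : Type*} [AddCommGroup G] [Module F G] [Fintype G]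
    (f : G → F) (g₀ : G) (hf : ∀ g (c : F), f (g + c • g₀) = f g + c) (a : F) :
    Fintype.card F * (Finset.univ.filter fun g => f g = a).card = Fintype.card G := by
  classical
  have hfib : ∀ b : F, (Finset.univ.filter fun g => f g = b).card
      = (Finset.univ.filter fun g => f g = a).card := by
    intro b
    refine Finset.card_equiv (Equiv.addRight ((a - b) • g₀)) fun g => ?_
    simp only [Finset.mem_filter, Finset.mem_univ, true_and, Equiv.coe_addRight, hf]
    constructor
    · rintro rfl
      ring
    · intro h
      linear_combination h
  have := Finset.card_eq_sum_card_fiberwise (f := f) (s := (Finset.univ : Finset G))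
    (t := Finset.univ) (fun _ _ => Finset.mem_coe.2 (Finset.mem_univ _))
  rw [Finset.card_univ] at this
  simp only [hfib] at this
  rw [this]
  simp

end GHCode

section Construction

open Matrix

variable {F : Type*} [Field F] [DecidableEq F] {ι : Type*} {m a : ℕ}

/-- The coordinate vector of `u` if `u ∈ T`, and zero otherwise. -/
def bump (T : Finset (Fin m → F)) (u : Fin m → F) : T → F :=
  fun t => if u = t then 1 else 0

/-- The functions `(x, y) ↦ α + v ⬝ y + u ⬝ x + ∑ t, w t * δ (P t) y`, pulled back along
a labelling `e` of the coordinates. -/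
def evalMap (T : Finset (Fin m → F)) (P : T → Fin a → F)
    (e : ι → (Fin m → F) × (Fin a → F)) :
    (F × (Fin a → F) × (Fin m → F) × (T → F)) →ₗ[F] (ι → F) where
  toFun p i := p.1 + p.2.1 ⬝ᵥ (e i).2 + p.2.2.1 ⬝ᵥ (e i).1
    + p.2.2.2 ⬝ᵥ (fun t => if (e i).2 = P t then 1 else 0)
  map_add' p p' := by
    ext i
    simp only [Prod.fst_add, Prod.snd_add, add_dotProduct, Pi.add_apply]
    ring
  map_smul' c p := by
    ext i
    simp only [Prod.smul_fst, Prod.smul_snd, smul_dotProduct, Pi.smul_apply, smul_eq_mul,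
      RingHom.id_apply]
    ring

/-- The parameters of the codewords of the constructed code. -/
def paramCode (T : Finset (Fin m → F)) : Set (F × (Fin a → F) × (Fin m → F) × (T → F)) :=
  {p | p.2.2.2 = bump T p.2.2.1}

/-- A Maiorana-McFarland type matrix. -/
def bumpMatrix (T : Finset (Fin m → F)) (P : T → Fin a → F)
    (e : ι → (Fin m → F) × (Fin a → F)) : Matrix ι ι F :=
  fun i => evalMap T P e (0, (e i).2, (e i).1, bump T (e i).1)

/-- The vectors other than zero and the standard basis. -/
def offBasis (F : Type*) [Field F] [Fintype F] [DecidableEq F] (n : ℕ) : Finset (Fin n → F) :=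
  Finset.univ \ insert 0 (Finset.univ.image fun i => Pi.single i 1)

lemma bump_of_notMem {T : Finset (Fin m → F)} {u : Fin m → F} (hu : u ∉ T) : bump T u = 0 := by
  ext t
  have : u ≠ t := fun h => hu (h ▸ t.2)
  simp [bump, this]

lemma bump_of_mem {T : Finset (Fin m → F)} (t : T) : bump T t = Pi.single t 1 := by
  ext t'
  rcases eq_or_ne t t' with rfl | h
  · simp [bump]
  · simp [bump, h.symm, Subtype.coe_injective.ne h]

lemma ghCode_bumpMatrix (T : Finset (Fin m → F)) (P : T → Fin a → F)
    (e : ι → (Fin m → F) × (Fin a → F)) (he : Function.Surjective e) :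
    ghCode (bumpMatrix T P e) = evalMap T P e '' paramCode T := by
  ext f
  constructor
  · rintro ⟨α, i, rfl⟩
    refine ⟨(α, (e i).2, (e i).1, bump T (e i).1), rfl, ?_⟩
    ext s
    simp [bumpMatrix, evalMap]
    ring
  · rintro ⟨⟨α, v, u, w⟩, hw, rfl⟩
    obtain ⟨i, hi⟩ := he (u, v)
    refine ⟨α, i, ?_⟩
    have hw' : w = bump T u := hw
    ext s
    simp [bumpMatrix, evalMap, hi, hw']
    ring

lemma kernel_paramCode {T : Finset (Fin m → F)} (hT : T.Nonempty) (h0 : (0 : Fin m → F) ∉ T)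
    (hF : ∃ l : F, l ≠ 0 ∧ l ≠ 1) (x : F × (Fin a → F) × (Fin m → F) × (T → F)) :
    x.2.2 = 0 ↔ ∀ α : F, ∀ c ∈ paramCode T, α • x + c ∈ paramCode T := by
  constructor
  · intro hx α c hc
    simpa [paramCode, hx] using hc
  · intro hx
    have h0c : (0 : F × (Fin a → F) × (Fin m → F) × (T → F)) ∈ paramCode T := by
      simp [paramCode, bump_of_notMem h0]
    have hsm : ∀ α : F, α • x.2.2.2 = bump T (α • x.2.2.1) := fun α => by
      simpa [paramCode] using hx α 0 h0c
    have hw : x.2.2.2 = bump T x.2.2.1 := by simpa using hsm 1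
    have hu : x.2.2.1 = 0 := by
      by_contra hne
      by_cases huT : x.2.2.1 ∈ T
      · obtain ⟨l, hl0, hl1⟩ := hF
        have h1 := congrFun (hsm l) ⟨_, huT⟩
        rw [hw] at h1
        simp only [bump, Pi.smul_apply, if_true, smul_eq_mul, mul_one] at h1
        split_ifs at h1
        · exact hl1 h1
        · exact hl0 h1
      · obtain ⟨t, ht⟩ := hT
        have h1 : (1 : F) • x + (0, 0, t, bump T t) ∈ paramCode T := hx 1 _ rfl
        have h2 : x.2.2.2 + bump T t = bump T (x.2.2.1 + t) := by
          simpa [paramCode] using h1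
        rw [hw, bump_of_notMem huT, zero_add] at h2
        have h3 := congrFun h2 ⟨t, ht⟩
        simp [bump, hne] at h3
    refine Prod.ext hu ?_
    rw [hw, hu, bump_of_notMem h0]
    rfl

lemma span_paramCode {T : Finset (Fin m → F)} (h0 : (0 : Fin m → F) ∉ T)
    (hT : ∀ i, (Pi.single i 1 : Fin m → F) ∉ T) :
    Submodule.span F (paramCode T : Set (F × (Fin a → F) × (Fin m → F) × (T → F))) = ⊤ := by
  rw [eq_top_iff]
  set S := Submodule.span F (paramCode T : Set (F × (Fin a → F) × (Fin m → F) × (T → F)))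
  have hu : ∀ u : Fin m → F, ((0, 0, u, 0) : F × (Fin a → F) × (Fin m → F) × (T → F)) ∈ S := by
    have : (⊤ : Submodule F (Fin m → F)) ≤ S.comap
        (LinearMap.inr F F _ ∘ₗ LinearMap.inr F (Fin a → F) _ ∘ₗ
          LinearMap.inl F (Fin m → F) (T → F)) := by
      rw [← (Pi.basisFun F (Fin m)).span_eq, Submodule.span_le]
      rintro _ ⟨i, rfl⟩
      apply Submodule.subset_span
      simp [paramCode, bump_of_notMem (hT i)]
    exact fun u => this (Submodule.mem_top (x := u))
  have hw : ∀ w : T → F, ((0, 0, 0, w) : F × (Fin a → F) × (Fin m → F) × (T → F)) ∈ S := by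
    have : (⊤ : Submodule F (T → F)) ≤ S.comap
        (LinearMap.inr F F _ ∘ₗ LinearMap.inr F (Fin a → F) _ ∘ₗ
          LinearMap.inr F (Fin m → F) (T → F)) := by
      rw [← (Pi.basisFun F T).span_eq, Submodule.span_le]
      rintro _ ⟨t, rfl⟩
      have h1 : ((0, 0, t, bump T t) : F × (Fin a → F) × (Fin m → F) × (T → F)) ∈ S :=
        Submodule.subset_span rfl
      simpa [bump_of_mem] using S.sub_mem h1 (hu t)
    exact fun w => this (Submodule.mem_top (x := w))
  rintro ⟨α, v, u, w⟩ -
  have h1 : ((α, v, 0, 0) : F × (Fin a → F) × (Fin m → F) × (T → F)) ∈ S := by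
    apply Submodule.subset_span
    simp [paramCode, bump_of_notMem h0]
  simpa using S.add_mem (S.add_mem h1 (hu u)) (hw w)

variable [Fintype F]

lemma zero_notMem_offBasis (n : ℕ) : (0 : Fin n → F) ∉ offBasis F n := by
  simp [offBasis]

lemma single_notMem_offBasis (n : ℕ) (i : Fin n) :
    (Pi.single i 1 : Fin n → F) ∉ offBasis F n := by
  simp [offBasis]

lemma le_card_offBasis (n : ℕ) : Fintype.card F ^ n - (n + 1) ≤ (offBasis F n).card := by
  let B : Finset (Fin n → F) := insert 0 (Finset.univ.image fun i : Fin n => Pi.single i 1)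
  have h1 : B.card ≤ n + 1 := by
    refine (Finset.card_insert_le _ _).trans (Nat.add_le_add_right ?_ 1)
    exact Finset.card_image_le.trans (by simp)
  have h2 : (Finset.univ : Finset (Fin n → F)).card = Fintype.card F ^ n := by
    simp
  have h3 : (Finset.univ : Finset (Fin n → F)).card - B.card ≤ (offBasis F n).card :=
    Finset.le_card_sdiff B Finset.univ
  omega

lemma evalMap_injective {T : Finset (Fin m → F)} {P : T → Fin a → F}
    (hP : Function.Injective P) (hPo : ∀ t, P t ∈ offBasis F a)
    {e : ι → (Fin m → F) × (Fin a → F)} (he : Function.Surjective e) :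
    Function.Injective (evalMap T P e) := by
  rw [injective_iff_map_eq_zero]
  rintro ⟨α, v, u, w⟩ hz
  have hxy : ∀ (x : Fin m → F) (y : Fin a → F), α + v ⬝ᵥ y + u ⬝ᵥ x
      + w ⬝ᵥ (fun t => if y = P t then 1 else 0) = 0 := by
    intro x y
    obtain ⟨i, hi⟩ := he (x, y)
    simpa [evalMap, hi] using congrFun hz i
  have hP0 : ∀ t, (0 : Fin a → F) ≠ P t := fun t h =>
    zero_notMem_offBasis (F := F) a (h ▸ hPo t)
  have hP1 : ∀ i t, (Pi.single i 1 : Fin a → F) ≠ P t := fun i t h =>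
    single_notMem_offBasis (F := F) a i (h ▸ hPo t)
  have hzero : (fun _ : T => (0 : F)) = 0 := rfl
  have hα : α = 0 := by simpa [hP0, hzero] using hxy 0 0
  have hu : u = 0 := by
    ext i
    simpa [hP0, hα, hzero] using hxy (Pi.single i 1) 0
  have hv : v = 0 := by
    ext i
    simpa [hP1, hα, hzero] using hxy 0 (Pi.single i 1)
  have hw : w = 0 := by
    ext t
    simpa [hα, hu, hv, hP.eq_iff, dotProduct] using hxy 0 (P t)
  simp [hα, hu, hv, hw]

lemma isGH_bumpMatrix [Fintype ι] (T : Finset (Fin m → F)) (P : T → Fin a → F)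
    (e : ι ≃ (Fin m → F) × (Fin a → F)) {lam : ℕ}
    (hlam : Fintype.card F * lam = Fintype.card F ^ (m + a)) :
    IsGH lam (bumpMatrix T P e) := by
  intro i j hij b
  have hq : 0 < Fintype.card F := Fintype.card_pos
  let B (p z : (Fin m → F) × (Fin a → F)) : F :=
    p.2 ⬝ᵥ z.2 + p.1 ⬝ᵥ z.1 + bump T p.1 ⬝ᵥ (fun t => if z.2 = P t then 1 else 0)
  have hB : ∀ i s, bumpMatrix T P e i s = B (e i) (e s) := fun i s => by
    simp [bumpMatrix, evalMap, B]
  have hcard : (Finset.univ.filter fun s => bumpMatrix T P e i s - bumpMatrix T P e j s = b).card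
      = (Finset.univ.filter fun z => B (e i) z - B (e j) z = b).card :=
    Finset.card_equiv e fun s => by simp [hB]
  rw [hcard]
  apply Nat.eq_of_mul_eq_mul_left hq
  rw [hlam]
  have hG : Fintype.card ((Fin m → F) × (Fin a → F)) = Fintype.card F ^ (m + a) := by
    simp [pow_add]
  rw [← hG]
  have hne : e i ≠ e j := fun h => hij (e.injective h)
  have hform : ∀ {n : ℕ} {d : Fin n → F}, d ≠ 0 → ∃ z, d ⬝ᵥ z = 1 := by
    intro n d hd
    obtain ⟨l, hl⟩ := Function.ne_iff.1 hd
    exact ⟨Pi.single l (d l)⁻¹, by simpa using mul_inv_cancel₀ hl⟩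
  by_cases h1 : (e i).1 = (e j).1
  · have h2 : (e i).2 - (e j).2 ≠ 0 := fun h => hne (Prod.ext h1 (sub_eq_zero.1 h))
    obtain ⟨z, hz⟩ := hform h2
    refine card_filter_eq_of_translate _ (0, z) (fun g c => ?_) b
    simp only [B, h1, sub_dotProduct, Prod.fst_add, Prod.snd_add, Prod.smul_mk, smul_zero,
      dotProduct_add, dotProduct_smul, smul_eq_mul, add_zero] at hz ⊢
    linear_combination c * hz
  · obtain ⟨z, hz⟩ := hform (sub_ne_zero.2 h1)
    refine card_filter_eq_of_translate _ (z, 0) (fun g c => ?_) b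
    simp only [B, sub_dotProduct, Prod.fst_add, Prod.snd_add, Prod.smul_mk, smul_zero,
      dotProduct_add, dotProduct_smul, smul_eq_mul, add_zero] at hz ⊢
    linear_combination c * hz

lemma normalized_bumpMatrix {n : ℕ} {T : Finset (Fin m → F)} {P : T → Fin a → F}
    (h0 : (0 : Fin m → F) ∉ T) (hPo : ∀ t, P t ∈ offBasis F a)
    {e : Fin n → (Fin m → F) × (Fin a → F)} (he : ∀ i : Fin n, i.val = 0 → e i = 0) :
    Normalized (bumpMatrix T P e) := by
  have hP0 : ∀ t, (0 : Fin a → F) ≠ P t := fun t h =>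
    zero_notMem_offBasis (F := F) a (h ▸ hPo t)
  have hzero : (fun _ : T => (0 : F)) = 0 := rfl
  rintro i s (hi | hs)
  · simp [bumpMatrix, evalMap, he i hi, bump_of_notMem h0]
  · simp [bumpMatrix, evalMap, he s hs, hP0, hzero]

lemma kerDim_ghCode_bumpMatrix {T : Finset (Fin m → F)} (hT : T.Nonempty)
    (hTo : T ⊆ offBasis F m) {P : T → Fin a → F}
    (hP : Function.Injective P) (hPo : ∀ t, P t ∈ offBasis F a)
    {e : ι → (Fin m → F) × (Fin a → F)} (he : Function.Surjective e)
    (hF : ∃ l : F, l ≠ 0 ∧ l ≠ 1) :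
    kerDim (ghCode (bumpMatrix T P e)) = a + 1 := by
  have h0 : (0 : Fin m → F) ∉ T := fun h => zero_notMem_offBasis m (hTo h)
  let π : (F × (Fin a → F) × (Fin m → F) × (T → F)) →ₗ[F] ((Fin m → F) × (T → F)) :=
    LinearMap.snd F _ _ ∘ₗ LinearMap.snd F _ _
  have hπ : LinearMap.range π = ⊤ :=
    LinearMap.range_eq_top.2 fun z => ⟨(0, 0, z), rfl⟩
  rw [ghCode_bumpMatrix T P e he,
    kerDim_image _ (evalMap_injective hP hPo he) (by simp [paramCode, bump_of_notMem h0])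
      (LinearMap.ker π) fun x => (kernel_paramCode hT h0 hF x)]
  have := LinearMap.finrank_range_add_finrank_ker π
  rw [hπ, finrank_top] at this
  simp only [Module.finrank_prod, Module.finrank_pi, Module.finrank_self, Fintype.card_fin] at this
  omega

lemma rankC_ghCode_bumpMatrix {T : Finset (Fin m → F)} (hTo : T ⊆ offBasis F m)
    {P : T → Fin a → F} (hP : Function.Injective P) (hPo : ∀ t, P t ∈ offBasis F a)
    {e : ι → (Fin m → F) × (Fin a → F)} (he : Function.Surjective e) :
    rankC (ghCode (bumpMatrix T P e)) = 1 + (a + (m + T.card)) := by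
  rw [ghCode_bumpMatrix T P e he, rankC_image _ (evalMap_injective hP hPo he),
    span_paramCode (fun h => zero_notMem_offBasis m (hTo h))
      fun i h => single_notMem_offBasis m i (hTo h), finrank_top]
  simp

end Construction

lemma pow_sub_succ_le_pow_sub_succ {q m a : ℕ} (hq : 2 ≤ q) (hma : m ≤ a) :
    q ^ m - (m + 1) ≤ q ^ a - (a + 1) := by
  induction a, hma using Nat.le_induction with
  | base => exact le_rfl
  | succ a _ ih =>
    have h1 : 2 * q ^ a ≤ q ^ (a + 1) := by
      rw [pow_succ, mul_comm]
      exact Nat.mul_le_mul_left _ hq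
    have h2 : 0 < q ^ a := pow_pos (by omega) a
    omega

lemma exists_fin_equiv_zero {G : Type*} [Fintype G] [Zero G] {n : ℕ} (hn : Fintype.card G = n) :
    ∃ e : Fin n ≃ G, ∀ i : Fin n, i.val = 0 → e i = 0 := by
  classical
  have hpos : 0 < n := hn ▸ Fintype.card_pos_iff.2 ⟨0⟩
  let e := (Fintype.equivFinOfCardEq hn).symm
  refine ⟨e.trans (Equiv.swap (e ⟨0, hpos⟩) 0), fun i hi => ?_⟩
  have : i = ⟨0, hpos⟩ := Fin.ext hi
  simp [this]

theorem stmt19 {q h k r : ℕ} {F : Type*} [Field F] [Fintype F] [DecidableEq F]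
    (hcard : Fintype.card F = q) (hq : 2 < q) (hh : 2 ≤ h)
    (hk1 : (h + 3) / 2 ≤ k) (hk2 : k ≤ h) :
    (∃ H : Matrix (Fin (q ^ h)) (Fin (q ^ h)) F,
        IsGH (q ^ (h - 1)) H ∧ Normalized H ∧
        kerDim (ghCode H) = k ∧ rankC (ghCode H) = r) ↔
      h + 2 ≤ r ∧ r ≤ k + q ^ (h + 1 - k) - 1 := by
  subst hcard
  have hF : 0 < Fintype.card F := Fintype.card_pos
  constructor
  · rintro ⟨H, hGH, hN, hker, hrank⟩
    have hpos : 0 < Fintype.card F ^ h := pow_pos hF h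
    have : Nonempty (Fin (Fintype.card F ^ h)) := ⟨⟨0, hpos⟩⟩
    have hC : (ghCode H).ncard = Fintype.card F ^ (h + 1) := by
      rw [hGH.ncard_ghCode (pow_pos hF _), Fintype.card_fin, pow_succ, mul_comm]
    have h0 : (0 : Fin (Fintype.card F ^ h) → F) ∈ ghCode H := by
      refine ⟨0, ⟨0, hpos⟩, ?_⟩
      ext s
      simpa using (hN ⟨0, hpos⟩ s (Or.inl rfl)).symm
    constructor
    · by_contra hlt
      have := kerDim_eq_of_rankC_le hC (by omega)
      omega
    · have := rankC_le hC h0 (by omega)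
      rw [hker, hrank] at this
      have := pow_pos hF (h + 1 - k)
      omega
  · rintro ⟨hr1, hr2⟩
    obtain ⟨m, hm⟩ : ∃ m, m = h + 1 - k := ⟨_, rfl⟩
    obtain ⟨a, ha⟩ : ∃ a, a + 1 = k := ⟨k - 1, by omega⟩
    rw [← hm] at hr2
    have hbound := le_card_offBasis (F := F) m
    have hpow := pow_pos hF m
    obtain ⟨T, hTo, hTcard⟩ := Finset.exists_subset_card_eq
      (show r - (h + 1) ≤ (offBasis F m).card by omega)
    have hT : T.Nonempty := Finset.card_pos.1 (by omega)
    have hTa : Fintype.card T ≤ Fintype.card (offBasis F a) := by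
      rw [Fintype.card_coe, Fintype.card_coe]
      refine le_trans ?_ (le_card_offBasis a)
      refine le_trans ?_ (pow_sub_succ_le_pow_sub_succ (by omega) (show m ≤ a by omega))
      omega
    obtain ⟨P⟩ := Function.Embedding.nonempty_of_card_le hTa
    have hP : Function.Injective (fun t => (P t : Fin a → F)) :=
      Subtype.val_injective.comp P.injective
    have hPo : ∀ t, (P t : Fin a → F) ∈ offBasis F a := fun t => (P t).2
    have hma : m + a = h := by omega
    obtain ⟨e, he⟩ := exists_fin_equiv_zero (G := (Fin m → F) × (Fin a → F))
      (n := Fintype.card F ^ h) (by simp [← hma, pow_add])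
    have hl : ∃ l : F, l ≠ 0 ∧ l ≠ 1 := by
      obtain ⟨l, hl⟩ := Finset.exists_mem_notMem_of_card_lt_card
        (s := {0, 1}) (t := (Finset.univ : Finset F))
        (lt_of_le_of_lt Finset.card_le_two (by rwa [Finset.card_univ]))
      exact ⟨l, by simpa using hl⟩
    refine ⟨bumpMatrix T (fun t => (P t : Fin a → F)) e, isGH_bumpMatrix T _ e ?_,
      normalized_bumpMatrix (fun h => zero_notMem_offBasis m (hTo h)) hPo he, ?_, ?_⟩
    · rw [hma, ← pow_succ', Nat.sub_add_cancel (by omega)]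
    · rw [kerDim_ghCode_bumpMatrix hT hTo hP hPo e.surjective hl, ha]
    · rw [rankC_ghCode_bumpMatrix hTo hP hPo e.surjective]
      omega
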